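/- Fix α > −1 and an integer n ≥ 1, and define H_n(t) := t · d/dt log( D_n(t, α) / D_n(0, α) ) for t > 0. Then H_n is twice differentiable on (0,∞) and satisfies, for all t > 0, the Jimbo–Miwa–Okamoto σ-form of Painlevé V: ( t H_n'' )² = 4 ( H_n' )² ( H_n − n(n+α) − t H_n' ) + ( (2n + α − t) H_n' + H_n )², where primes denote derivatives with respect to t. -/

import Mathlib

/-!
The proof runs through the orthogonal polynomials of the truncated weight. Write
`L f = ∫_t^∞ f(x) x^α e^{-x} dx` and `Λ f = ∫_t^∞ f(x) x^{α-1} e^{-x} dx`, so that `L f = Λ (X f)`,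
put `w = t^α e^{-t}`, and let `P`, `Q` be the monic polynomials of degrees `n` and `n - 1`
orthogonal for `L` (both depend on `t`), with squared norms `h`, `g`. Let `p` be the coefficient of
`x^{n-1}` in `P`, and put `β = h / g` and `r = w P(t) Q(t) / g`.

* Integration by parts gives `L f' + α Λ f - L f = -w f(t)` (`lam_ibp`). Applied to the moments, it
  writes `t M'` for the Hankel matrix `M` as `N M + M N + (1 + α) M - M K`, where
  `N = diag(0, …, n-1)` and `K` is the companion matrix of `P`. With Jacobi's formula for the
  derivative of a determinant this yields `H = n (n + α) + p` (`trace_adj_moments`).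
* Applied to `X P Q`, `P²`, `Q²`, `P Q`, it gives (`ladder`) the relations `β + p = t r` and
  `(h - w P(t)²) (g - w Q(t)²) = (n g + w P(t) Q(t)) ((n + α) g + w P(t) Q(t))`.
* Differentiating the orthogonality relations in `t` gives `p' = r`, `h' = -w P(t)²` and
  `g' = -w Q(t)²` (`hasDerivAt_subCoef`, `hasDerivAt_orthNorm`).

Consequently `H' = r` and, from `β + p = t r`, also `t H'' = β' = B - A` with `A = w P(t)² / g` and
`B = h w Q(t)² / g²`. Here `A B = β r²`, the product relation above computes `A + B` in terms of
`β` and `r`, and `(B - A)² = (A + B)² - 4 A B` is the σ-form of Painlevé V.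
-/

open MeasureTheory

/-- The `n × n` Hankel determinant of the Laguerre weight `x^α e^{-x}`
restricted to `[t, ∞)`. -/
noncomputable def laguerreHankel (n : ℕ) (t α : ℝ) : ℝ :=
  Matrix.det (Matrix.of fun i j : Fin n =>
    ∫ x in Set.Ioi t, x ^ (((i : ℕ) : ℝ) + ((j : ℕ) : ℝ) + α) * Real.exp (-x))

open Polynomial Filter Set
open scoped Topology

/-! ### Algebra of orthogonal polynomials at the endpoint -/

/-- Pairing the orthogonal polynomial `P` of degree `N` with a polynomial of degree at most `N` only
sees the coefficient of `X ^ N`. -/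
theorem orth_coeff (L : ℝ[X] →ₗ[ℝ] ℝ) {P : ℝ[X]} {N : ℕ} (hP : P.Monic) (hN : P.natDegree = N)
    (orth : ∀ f : ℝ[X], f.degree < N → L (P * f) = 0) {f : ℝ[X]} (hf : f.degree < (N + 1 : ℕ)) :
    L (P * f) = f.coeff N * L (P * P) := by
  have h1 : (f - C (f.coeff N) * P).degree < N := by
    rw [degree_lt_iff_coeff_zero] at hf ⊢
    intro k hk
    rw [coeff_sub, coeff_C_mul]
    rcases hk.eq_or_lt with rfl | hk
    · rw [← hN, hP.coeff_natDegree]; ring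
    · rw [hf k hk, coeff_eq_zero_of_natDegree_lt (by omega : P.natDegree < k)]; ring
  have h2 := orth _ h1
  rw [mul_sub, map_sub, sub_eq_zero] at h2
  rw [h2, ← smul_eq_C_mul, mul_smul_comm, map_smul, smul_eq_mul]

/-- The two algebraic relations between consecutive orthogonal polynomials `P`, `Q` at the endpoint
`t`. The first is integration by parts for `X P Q`. For the second, integration by parts for `P²`,
`Q²` and `P Q` turns each factor into `±α Λ (F G)`, and orthogonality reduces `Λ (F G)` to
`G(0) Λ F`, in both steps up to multiples of `L (Q * Q)` that cancel; both sides become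
`α² P(0) Q(0) Λ(P) Λ(Q)`. -/
theorem ladder (Λ L : ℝ[X] →ₗ[ℝ] ℝ) (hL : ∀ f, L f = Λ (X * f)) (t w α : ℝ)
    (ibp : ∀ f : ℝ[X], L (derivative f) + α * Λ f - L f = -(w * f.eval t))
    {P Q : ℝ[X]} {m : ℕ} (hP : P.Monic) (hPd : P.natDegree = m + 1)
    (hQ : Q.Monic) (hQd : Q.natDegree = m)
    (oP : ∀ f : ℝ[X], f.degree < (m + 1 : ℕ) → L (P * f) = 0)
    (oQ : ∀ f : ℝ[X], f.degree < (m : ℕ) → L (Q * f) = 0) :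
    L (P * P) + P.coeff m * L (Q * Q) = t * (w * P.eval t * Q.eval t) ∧
    (L (P * P) - w * P.eval t ^ 2) * (L (Q * Q) - w * Q.eval t ^ 2) =
      (L (Q * Q) * (m + 1) + w * P.eval t * Q.eval t) *
      (L (Q * Q) * (m + 1 + α) + w * P.eval t * Q.eval t) := by
  have cP : ∀ k, m + 1 < k → P.coeff k = 0 := fun k hk =>
    coeff_eq_zero_of_natDegree_lt (by omega)
  have cQ : ∀ k, m < k → Q.coeff k = 0 := fun k hk =>
    coeff_eq_zero_of_natDegree_lt (by omega)
  have cP1 : P.coeff (m + 1) = 1 := by rw [← hPd]; exact hP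
  have cQ1 : Q.coeff m = 1 := by rw [← hQd]; exact hQ
  have PQ : L (P * Q) = 0 := by
    apply oP; rw [degree_lt_iff_coeff_zero]; intro k hk; exact cQ k hk
  have PdP : L (P * derivative P) = 0 := by
    apply oP; rw [degree_lt_iff_coeff_zero]; intro k hk
    rw [coeff_derivative, cP _ (by omega)]; ring
  have PdQ : L (P * derivative Q) = 0 := by
    apply oP; rw [degree_lt_iff_coeff_zero]; intro k hk
    rw [coeff_derivative, cQ _ (by omega)]; ring
  have QdQ : L (Q * derivative Q) = 0 := by
    apply oQ; rw [degree_lt_iff_coeff_zero]; intro k hk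
    rw [coeff_derivative, cQ _ (by omega)]; ring
  have QdP : L (Q * derivative P) = (m + 1) * L (Q * Q) := by
    rw [orth_coeff L hQ hQd oQ, coeff_derivative, cP1]; · ring
    rw [degree_lt_iff_coeff_zero]; intro k hk
    rw [coeff_derivative, cP _ (by omega)]; ring
  have XPdQ : L (P * (X * derivative Q)) = 0 := by
    apply oP; rw [degree_lt_iff_coeff_zero]; intro k hk
    obtain ⟨k, rfl⟩ : ∃ j, k = j + 1 := ⟨k - 1, by omega⟩
    rw [coeff_X_mul, coeff_derivative, cQ _ (by omega)]; ring
  have XPQ : L (P * (X * Q)) = L (P * P) := by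
    rw [orth_coeff L hP hPd oP, coeff_X_mul, cQ1]; · ring
    rw [degree_lt_iff_coeff_zero]; intro k hk
    obtain ⟨k, rfl⟩ : ∃ j, k = j + 1 := ⟨k - 1, by omega⟩
    rw [coeff_X_mul, cQ _ (by omega)]
  -- `X P' - (m + 1) P` has degree at most `m`, with coefficient `-p` there.
  have XQdP : L (Q * (X * derivative P)) = -P.coeff m * L (Q * Q) := by
    have cX : ∀ k, (X * derivative P).coeff k = k * P.coeff k := by
      rintro (_ | k)
      · simp
      · rw [coeff_X_mul, coeff_derivative]; push_cast; ring
    have h1 : L (Q * (X * derivative P - (m + 1 : ℝ) • P)) = -P.coeff m * L (Q * Q) := by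
      rw [orth_coeff L hQ hQd oQ, coeff_sub, cX, coeff_smul, smul_eq_mul]; · ring
      rw [degree_lt_iff_coeff_zero]; intro k hk
      rw [coeff_sub, cX, coeff_smul, smul_eq_mul]
      rcases hk.eq_or_lt with rfl | hk
      · push_cast; ring
      · rw [cP _ hk]; ring
    rw [← h1, mul_sub, map_sub, mul_smul_comm, map_smul, mul_comm Q P, PQ]; simp
  have dP : L (P * P.divX) = 0 := by
    apply oP; rw [degree_lt_iff_coeff_zero]; intro k hk
    rw [coeff_divX, cP _ (by omega)]
  have dQ : L (P * Q.divX) = 0 := by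
    apply oP; rw [degree_lt_iff_coeff_zero]; intro k hk
    rw [coeff_divX, cQ _ (by omega)]
  have QQ : L (Q * Q.divX) = 0 := by
    apply oQ; rw [degree_lt_iff_coeff_zero]; intro k hk
    rw [coeff_divX, cQ _ (by omega)]
  have QP : L (Q * P.divX) = L (Q * Q) := by
    rw [orth_coeff L hQ hQd oQ, coeff_divX, cP1]; · ring
    rw [degree_lt_iff_coeff_zero]; intro k hk
    rw [coeff_divX, cP _ (by omega)]
  have split : ∀ f g : ℝ[X], Λ (f * g) = L (f * g.divX) + g.coeff 0 * Λ f := by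
    intro f g
    conv_lhs => rw [← X_mul_divX_add g]
    rw [mul_add, map_add, hL, mul_comm f (C _), ← smul_eq_C_mul, map_smul, smul_eq_mul]
    congr 2; ring
  have e1 := ibp (X * (P * Q))
  have e2 := ibp (P * P)
  have e3 := ibp (Q * Q)
  have e4 := ibp (P * Q)
  have s1 := split P P
  have s2 := split Q Q
  have s3 := split P Q
  have s4 := split Q P
  rw [mul_comm Q P] at s4
  simp only [derivative_mul, derivative_X, one_mul, eval_mul, eval_X, mul_add, map_add,
    ← hL] at e1 e2 e3 e4
  rw [show X * (derivative P * Q) = Q * (X * derivative P) by ring,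
    show X * (P * derivative Q) = P * (X * derivative Q) by ring,
    show X * (P * Q) = P * (X * Q) by ring, PQ, XQdP, XPdQ, XPQ] at e1
  rw [mul_comm (derivative P) P, PdP, s1, dP] at e2
  rw [mul_comm (derivative Q) Q, QdQ, s2, QQ] at e3
  rw [mul_comm (derivative P) Q, QdP, PdQ, PQ] at e4
  rw [dQ] at s3
  rw [QP] at s4
  refine ⟨by linear_combination -e1, ?_⟩
  have f1 : L (P * P) - w * P.eval t ^ 2 = α * (P.coeff 0 * Λ P) := by linear_combination -e2
  have f2 : L (Q * Q) - w * Q.eval t ^ 2 = α * (Q.coeff 0 * Λ Q) := by linear_combination -e3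
  have f3 : L (Q * Q) * (m + 1) + w * P.eval t * Q.eval t = -α * (Q.coeff 0 * Λ P) := by
    linear_combination e4 - α * s3
  have f4 : L (Q * Q) * (m + 1 + α) + w * P.eval t * Q.eval t = -α * (P.coeff 0 * Λ Q) := by
    linear_combination e4 - α * s4
  rw [f1, f2, f3, f4]; ring

/-! ### The Laguerre weight on a half-line -/

/-- The Laguerre weight `x^α e^{-x}`. -/
noncomputable def lagW (α x : ℝ) : ℝ := x ^ α * Real.exp (-x)

theorem lagW_pos {α x : ℝ} (hx : 0 < x) : 0 < lagW α x :=
  mul_pos (Real.rpow_pos_of_pos hx _) (Real.exp_pos _)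

theorem lagW_add_nat {α x : ℝ} (hx : 0 < x) (k : ℕ) : x ^ k * lagW α x = lagW (k + α) x := by
  unfold lagW
  rw [Real.rpow_add hx, Real.rpow_natCast]; ring

theorem lagW_sub_one {α x : ℝ} (hx : 0 < x) : x * lagW (α - 1) x = lagW α x := by
  have := lagW_add_nat (α := α - 1) hx 1
  simpa using this

theorem continuousAt_lagW (α : ℝ) {x : ℝ} (hx : 0 < x) : ContinuousAt (lagW α) x := by
  unfold lagW
  exact (Real.continuousAt_rpow_const _ _ (Or.inl hx.ne')).mul (by fun_prop)

theorem integrableOn_lagW (α : ℝ) {t : ℝ} (ht : 0 < t) : IntegrableOn (lagW α) (Ioi t) := by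
  refine integrable_of_isBigO_exp_neg (b := 1 / 2) (by norm_num)
    (fun x hx => (continuousAt_lagW α (ht.trans_le hx)).continuousWithinAt) ?_
  have := (isLittleO_exp_mul_rpow_of_lt α (show (-1 : ℝ) < -(1 / 2) by norm_num)).isBigO
  refine this.congr_left fun x => ?_
  simp [lagW, mul_comm]

theorem integrableOn_poly_mul (α : ℝ) {t : ℝ} (ht : 0 < t) (f : ℝ[X]) :
    IntegrableOn (fun x => f.eval x * lagW α x) (Ioi t) := by
  induction f using Polynomial.induction_on' with
  | add p q hp hq =>
    simp only [eval_add, add_mul]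
    exact hp.add hq
  | monomial k a =>
    have h : IntegrableOn (fun x => a * lagW (k + α) x) (Ioi t) :=
      (integrableOn_lagW (k + α) ht).const_mul a
    refine h.congr_fun (fun x hx => ?_) measurableSet_Ioi
    simp only [eval_monomial]
    rw [mul_assoc, lagW_add_nat (ht.trans hx)]

/-- Integration of a polynomial against the Laguerre weight on `(t, ∞)`. -/
noncomputable def lam (α t : ℝ) (f : ℝ[X]) : ℝ := ∫ x in Ioi t, f.eval x * lagW α x

/-- `lam α t` as a linear functional. Positivity of `t` ensures that all integrals converge,
whatever `α` is. -/
noncomputable def lamLin (α : ℝ) {t : ℝ} (ht : 0 < t) : ℝ[X] →ₗ[ℝ] ℝ where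
  toFun := lam α t
  map_add' f g := by
    simp only [lam, eval_add, add_mul]
    exact integral_add (integrableOn_poly_mul α ht f) (integrableOn_poly_mul α ht g)
  map_smul' a f := by
    simp only [lam, eval_smul, smul_eq_mul, mul_assoc, RingHom.id_apply]
    exact integral_const_mul _ _

theorem lam_sub_one {α t : ℝ} (ht : 0 < t) (f : ℝ[X]) : lam (α - 1) t (X * f) = lam α t f := by
  refine setIntegral_congr_fun measurableSet_Ioi fun x hx => ?_
  simp only [eval_mul, eval_X]
  rw [← lagW_sub_one (α := α) (ht.trans hx)]; ring

theorem hasDerivAt_lagW (α : ℝ) {x : ℝ} (hx : 0 < x) :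
    HasDerivAt (lagW α) (α * lagW (α - 1) x - lagW α x) x := by
  have h1 := Real.hasDerivAt_rpow_const (x := x) (p := α) (Or.inl hx.ne')
  have h2 := (Real.hasDerivAt_exp (-x)).comp x (hasDerivAt_neg x)
  refine (h1.mul h2).congr_deriv ?_
  simp [lagW]; ring

/-- Integration by parts: `∫_t^∞ (f(x) x^α e^{-x})' dx = -f(t) t^α e^{-t}`. -/
theorem lam_ibp (α : ℝ) {t : ℝ} (ht : 0 < t) (f : ℝ[X]) :
    lam α t (derivative f) + α * lam (α - 1) t f - lam α t f = -(lagW α t * f.eval t) := by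
  have hd : ∀ x ∈ Ici t, HasDerivAt (fun x => f.eval x * lagW α x)
      ((derivative f).eval x * lagW α x + α * (f.eval x * lagW (α - 1) x)
        - f.eval x * lagW α x) x := by
    intro x hx
    refine ((f.hasDerivAt x).mul (hasDerivAt_lagW α (ht.trans_le hx))).congr_deriv ?_
    ring
  have i1 := integrableOn_poly_mul α ht (derivative f)
  have i2 := (integrableOn_poly_mul (α - 1) ht f).const_mul α
  have i3 := integrableOn_poly_mul α ht f
  have h0 := tendsto_zero_of_hasDerivAt_of_integrableOn_Ioi
    (fun x hx => hd x (Ioi_subset_Ici_self hx)) ((i1.add i2).sub i3) i3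
  have h1 := integral_Ioi_of_hasDerivAt_of_tendsto' hd ((i1.add i2).sub i3) h0
  rw [integral_sub (by exact i1.add i2) i3, integral_add i1 i2, integral_const_mul] at h1
  simp only [lam]
  rw [h1]; ring

theorem hasDerivAt_lam (α : ℝ) {t : ℝ} (ht : 0 < t) (f : ℝ[X]) :
    HasDerivAt (fun s => lam α s f) (-(f.eval t * lagW α t)) t := by
  have hc : ∀ x, 0 < x → ContinuousAt (fun x => f.eval x * lagW α x) x := fun x hx =>
    f.continuous.continuousAt.mul (continuousAt_lagW α hx)
  have ht2 : 0 < t / 2 := by linarith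
  have hint : IntervalIntegrable (fun x => f.eval x * lagW α x) volume (t / 2) t := by
    rw [intervalIntegrable_iff_integrableOn_Ioc_of_le (by linarith)]
    exact (integrableOn_poly_mul α ht2 f).mono_set Ioc_subset_Ioi_self
  have hm : StronglyMeasurableAtFilter (fun x => f.eval x * lagW α x) (𝓝 t) :=
    ContinuousOn.stronglyMeasurableAtFilter isOpen_Ioi
      (fun x hx => (hc x hx).continuousWithinAt) t (show t ∈ Ioi 0 from ht)
  have h1 := intervalIntegral.integral_hasDerivAt_right hint hm (hc t ht)
  have h2 := (h1.const_sub (lam α (t / 2) f))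
  refine h2.congr_of_eventuallyEq ?_
  filter_upwards [Ioi_mem_nhds (show t / 2 < t by linarith)] with s hs
  have := intervalIntegral.integral_Ioi_sub_Ioi (integrableOn_poly_mul α ht2 f)
    (le_of_lt hs)
  simp only [lam]
  linarith

theorem lam_sq_pos (α : ℝ) {t : ℝ} (ht : 0 < t) {f : ℝ[X]} (hf : f ≠ 0) :
    0 < lam α t (f * f) := by
  have hnn : 0 ≤ᵐ[volume.restrict (Ioi t)] fun x => (f * f).eval x * lagW α x := by
    filter_upwards [ae_restrict_mem measurableSet_Ioi] with x hx
    have := lagW_pos (α := α) (ht.trans hx)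
    simp only [eval_mul, Pi.zero_apply]
    exact mul_nonneg (mul_self_nonneg _) this.le
  rw [lam, setIntegral_pos_iff_support_of_nonneg_ae hnn (integrableOn_poly_mul α ht _)]
  -- The integrand vanishes on `Ioi t` only at the finitely many roots of `f`.
  have hsub : Ioi t \ (f.roots.toFinset : Set ℝ) ⊆
      Function.support (fun x => (f * f).eval x * lagW α x) ∩ Ioi t := by
    rintro x ⟨hx, hr⟩
    refine ⟨?_, hx⟩
    have : f.eval x ≠ 0 := by
      intro h; apply hr; simp [hf, h]
    have := lagW_pos (α := α) (ht.trans hx)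
    simp only [Function.mem_support, eval_mul]
    positivity
  refine lt_of_lt_of_le ?_ (measure_mono hsub)
  rw [measure_sdiff_null (Finset.measure_zero _ _)]
  simp

/-! ### Derivatives of determinants and inverses -/

/-- Jacobi's formula. -/
theorem hasDerivAt_det {N : ℕ} {M : ℝ → Matrix (Fin N) (Fin N) ℝ} {M' : Matrix (Fin N) (Fin N) ℝ}
    {t : ℝ} (h : ∀ i j, HasDerivAt (fun s => M s i j) (M' i j) t) :
    HasDerivAt (fun s => (M s).det) (((M t).adjugate * M').trace) t := by
  simp only [Matrix.det_apply']
  have h1 : ∀ σ : Equiv.Perm (Fin N), HasDerivAt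
      (fun s => ((Equiv.Perm.sign σ : ℤ) : ℝ) * ∏ i, M s (σ i) i)
      (((Equiv.Perm.sign σ : ℤ) : ℝ) *
        ∑ i, (∏ j ∈ Finset.univ.erase i, M t (σ j) j) • M' (σ i) i) t := fun σ =>
    (HasDerivAt.fun_finsetProd fun i _ => h (σ i) i).const_mul _
  refine (HasDerivAt.fun_sum fun σ _ => h1 σ).congr_deriv ?_
  have h2 : ∀ i, ((M t).adjugate * M') i i = ((M t).updateCol i (fun k => M' k i)).det := by
    intro i
    rw [← Matrix.cramer_apply, Matrix.cramer_eq_adjugate_mulVec]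
    rfl
  simp only [Matrix.trace, Matrix.diag_apply, h2, Matrix.det_apply', Finset.mul_sum]
  rw [Finset.sum_comm]
  refine Finset.sum_congr rfl fun i _ => Finset.sum_congr rfl fun σ _ => ?_
  rw [← Finset.mul_prod_erase Finset.univ _ (Finset.mem_univ i)]
  rw [Matrix.updateCol_self, smul_eq_mul, mul_comm (M' _ _)]
  congr 2
  refine Finset.prod_congr rfl fun j hj => ?_
  rw [Matrix.updateCol_ne (Finset.ne_of_mem_erase hj)]

theorem differentiableAt_inv_apply {N : ℕ} {M : ℝ → Matrix (Fin N) (Fin N) ℝ} {t : ℝ}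
    (h : ∀ i j, DifferentiableAt ℝ (fun s => M s i j) t) (h0 : (M t).det ≠ 0) (i j : Fin N) :
    DifferentiableAt ℝ (fun s => (M s)⁻¹ i j) t := by
  have hdet : ∀ {A : ℝ → Matrix (Fin N) (Fin N) ℝ},
      (∀ i j, DifferentiableAt ℝ (fun s => A s i j) t) →
      DifferentiableAt ℝ (fun s => (A s).det) t := fun hA =>
    (hasDerivAt_det (M' := fun i j => deriv (fun s => _) t)
      fun i j => (hA i j).hasDerivAt).differentiableAt
  simp only [Matrix.inv_def, Ring.inverse_eq_inv', Matrix.smul_apply, smul_eq_mul,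
    Matrix.adjugate_apply]
  refine ((hdet h).inv h0).mul (hdet fun k l => ?_)
  by_cases hk : k = j
  · subst hk; simp only [Matrix.updateRow_self]; exact differentiableAt_const _
  · simp only [Matrix.updateRow_ne hk]; exact h k l

/-! ### The moment matrix -/

/-- The Hankel matrix of moments of the Laguerre weight on `(t, ∞)`. -/
noncomputable def momMat (α : ℝ) (N : ℕ) (t : ℝ) : Matrix (Fin N) (Fin N) ℝ :=
  Matrix.of fun i j => lam α t (X ^ ((i : ℕ) + (j : ℕ)))

theorem laguerreHankel_eq {α t : ℝ} (ht : 0 < t) (n : ℕ) :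
    laguerreHankel n t α = (momMat α n t).det := by
  unfold laguerreHankel momMat
  congr 1
  ext i j
  refine setIntegral_congr_fun measurableSet_Ioi fun x hx => ?_
  simp only [eval_pow, eval_X]
  rw [lagW_add_nat (ht.trans hx), lagW]
  push_cast; rfl

/-- The polynomial of degree less than `N` with coefficient vector `v`. -/
noncomputable def polySum {N : ℕ} (v : Fin N → ℝ) : ℝ[X] := ∑ i : Fin N, v i • X ^ (i : ℕ)

theorem coeff_polySum {N : ℕ} (v : Fin N → ℝ) (k : Fin N) : (polySum v).coeff k = v k := by
  simp only [polySum, finsetSum_coeff, coeff_smul, coeff_X_pow, smul_eq_mul]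
  rw [Finset.sum_eq_single k]
  · simp
  · intro i _ hik
    rw [if_neg (fun h => hik (Fin.ext h.symm))]; ring
  · simp

theorem coeff_polySum_of_le {N : ℕ} (v : Fin N → ℝ) {k : ℕ} (hk : N ≤ k) :
    (polySum v).coeff k = 0 := by
  simp only [polySum, finsetSum_coeff, coeff_smul, coeff_X_pow, smul_eq_mul]
  refine Finset.sum_eq_zero fun i _ => ?_
  rw [if_neg (by omega)]; ring

theorem degree_polySum_lt {N : ℕ} (v : Fin N → ℝ) : (polySum v).degree < N := by
  rw [degree_lt_iff_coeff_zero]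
  intro k hk
  exact coeff_polySum_of_le v hk

theorem eq_polySum {N : ℕ} {f : ℝ[X]} (hf : f.degree < N) :
    f = polySum fun i : Fin N => f.coeff i := by
  ext k
  by_cases hk : k < N
  · exact (coeff_polySum (fun i : Fin N => f.coeff i) ⟨k, hk⟩).symm
  · rw [coeff_polySum_of_le _ (not_lt.1 hk)]
    exact (degree_lt_iff_coeff_zero _ _).1 hf k (not_lt.1 hk)

theorem map_polySum_mul {N : ℕ} (L : ℝ[X] →ₗ[ℝ] ℝ) (v : Fin N → ℝ) (f : ℝ[X]) :
    L (polySum v * f) = ∑ i, v i * L (X ^ (i : ℕ) * f) := by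
  simp [polySum, Finset.sum_mul]

/-- A vector in the kernel of the moment matrix would be the coefficient vector of a polynomial `f`
with `lam α t (f * f) = 0`. -/
theorem det_momMat_ne_zero {α t : ℝ} (ht : 0 < t) (N : ℕ) : (momMat α N t).det ≠ 0 := by
  intro h
  obtain ⟨v, hv, hMv⟩ := Matrix.exists_mulVec_eq_zero_iff.2 h
  have hf : polySum v ≠ 0 := by
    intro h0
    apply hv
    ext i
    rw [← coeff_polySum v i, h0]; simp
  have h1 : lamLin α ht (polySum v * polySum v) = 0 := by
    rw [map_polySum_mul]
    refine Finset.sum_eq_zero fun i _ => ?_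
    rw [mul_comm (X ^ _), map_polySum_mul]
    have := congrFun hMv i
    simp only [Matrix.mulVec, dotProduct, momMat, Matrix.of_apply, Pi.zero_apply] at this
    rw [← mul_zero (v i), ← this]
    congr 1
    refine Finset.sum_congr rfl fun j _ => ?_
    rw [← pow_add, mul_comm, add_comm]; rfl
  exact (lam_sq_pos α ht hf).ne h1.symm

/-! ### Orthogonal polynomials and their dependence on the endpoint -/

/-- The coefficients below the leading one of the monic orthogonal polynomial of degree `N`, as the
solution of the linear system expressing orthogonality. -/
noncomputable def orthCoef (α : ℝ) (N : ℕ) (t : ℝ) : Fin N → ℝ :=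
  -((momMat α N t)⁻¹.mulVec fun i => lam α t (X ^ (N + (i : ℕ))))

/-- The monic orthogonal polynomial of degree `N` for the Laguerre weight on `(t, ∞)`. -/
noncomputable def orthPoly (α : ℝ) (N : ℕ) (t : ℝ) : ℝ[X] := X ^ N + polySum (orthCoef α N t)

theorem orthPoly_coeff_self (α : ℝ) (N : ℕ) (t : ℝ) : (orthPoly α N t).coeff N = 1 := by
  simp [orthPoly, coeff_polySum_of_le]

theorem orthPoly_monic (α : ℝ) (N : ℕ) (t : ℝ) : (orthPoly α N t).Monic :=
  monic_X_pow_add (degree_polySum_lt _)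

theorem orthPoly_natDegree (α : ℝ) (N : ℕ) (t : ℝ) : (orthPoly α N t).natDegree = N := by
  refine natDegree_eq_of_degree_eq_some ?_
  rw [orthPoly, degree_add_eq_left_of_degree_lt, degree_X_pow]
  rw [degree_X_pow]; exact degree_polySum_lt _

theorem orthCoef_spec {α t : ℝ} (ht : 0 < t) {N : ℕ} (k : Fin N) :
    ∑ i, momMat α N t k i * orthCoef α N t i = -lam α t (X ^ (N + (k : ℕ))) := by
  have h : (momMat α N t).mulVec (orthCoef α N t) = -fun i : Fin N => lam α t (X ^ (N + (i : ℕ))) := by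
    rw [orthCoef, Matrix.mulVec_neg, Matrix.mulVec_mulVec,
      Matrix.mul_nonsing_inv _ (isUnit_iff_ne_zero.2 (det_momMat_ne_zero ht N)), Matrix.one_mulVec]
  exact congrFun h k

theorem lam_orthPoly_mul {α t : ℝ} (ht : 0 < t) (N : ℕ) (f : ℝ[X]) :
    lam α t (orthPoly α N t * f) =
      lam α t (X ^ N * f) + ∑ i, orthCoef α N t i * lam α t (X ^ (i : ℕ) * f) := by
  change lamLin α ht _ = _
  rw [orthPoly, add_mul, map_add, map_polySum_mul]
  rfl

theorem orthPoly_orth_pow {α t : ℝ} (ht : 0 < t) {N : ℕ} (k : Fin N) :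
    lam α t (orthPoly α N t * X ^ (k : ℕ)) = 0 := by
  rw [lam_orthPoly_mul ht, ← pow_add, ← sub_eq_zero.2 (orthCoef_spec ht k), sub_neg_eq_add,
    add_comm]
  congr 1
  refine Finset.sum_congr rfl fun i _ => ?_
  rw [← pow_add, mul_comm, add_comm]; rfl

theorem orthPoly_orth {α t : ℝ} (ht : 0 < t) {N : ℕ} {f : ℝ[X]} (hf : f.degree < N) :
    lam α t (orthPoly α N t * f) = 0 := by
  rw [eq_polySum hf, mul_comm]
  change lamLin α ht _ = _
  rw [map_polySum_mul]
  refine Finset.sum_eq_zero fun i _ => ?_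
  rw [mul_comm (X ^ _)]
  exact mul_eq_zero_of_right _ (orthPoly_orth_pow ht i)

theorem differentiableAt_orthCoef {α t : ℝ} (ht : 0 < t) {N : ℕ} (i : Fin N) :
    DifferentiableAt ℝ (fun s => orthCoef α N s i) t := by
  simp only [orthCoef, Pi.neg_apply, Matrix.mulVec, dotProduct]
  refine (DifferentiableAt.fun_sum fun j _ => ?_).neg
  refine DifferentiableAt.mul ?_ (hasDerivAt_lam α ht _).differentiableAt
  refine differentiableAt_inv_apply (fun k l => ?_) (det_momMat_ne_zero ht N) i j
  exact (hasDerivAt_lam α ht _).differentiableAt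

/-- The derivative of `orthPoly α N t` with respect to the endpoint `t`, coefficientwise. -/
noncomputable def orthDot (α : ℝ) (N : ℕ) (t : ℝ) : ℝ[X] :=
  polySum fun i : Fin N => deriv (fun s => orthCoef α N s i) t

theorem hasDerivAt_lam_orthPoly_mul {α t : ℝ} (ht : 0 < t) (N : ℕ) (f : ℝ[X]) :
    HasDerivAt (fun s => lam α s (orthPoly α N s * f))
      (lam α t (orthDot α N t * f) - lagW α t * (orthPoly α N t).eval t * f.eval t) t := by
  have h1 : HasDerivAt (fun s => lam α s (X ^ N * f) +
      ∑ i, orthCoef α N s i * lam α s (X ^ (i : ℕ) * f))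
      (-((X ^ N * f).eval t * lagW α t) +
        ∑ i : Fin N, (deriv (fun s => orthCoef α N s i) t * lam α t (X ^ (i : ℕ) * f) +
          orthCoef α N t i * -((X ^ (i : ℕ) * f).eval t * lagW α t))) t :=
    (hasDerivAt_lam α ht _).add (HasDerivAt.fun_sum fun i _ =>
      (differentiableAt_orthCoef ht i).hasDerivAt.mul (hasDerivAt_lam α ht _))
  refine (h1.congr_of_eventuallyEq ?_).congr_deriv ?_
  · filter_upwards [Ioi_mem_nhds ht] with s hs
    exact lam_orthPoly_mul hs N f
  · have h2 : lam α t (orthDot α N t * f) =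
        ∑ i : Fin N, deriv (fun s => orthCoef α N s i) t * lam α t (X ^ (i : ℕ) * f) :=
      map_polySum_mul (lamLin α ht) _ f
    rw [h2, Finset.sum_add_distrib]
    simp only [orthPoly, polySum, eval_add, eval_finsetSum, eval_mul, eval_pow, eval_X, eval_smul,
      smul_eq_mul]
    have h3 : ∑ i, orthCoef α N t i * -(t ^ (i : ℕ) * eval t f * lagW α t) =
        -(lagW α t * (∑ i, orthCoef α N t i * t ^ (i : ℕ)) * eval t f) := by
      rw [Finset.mul_sum, Finset.sum_mul, ← Finset.sum_neg_distrib]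
      exact Finset.sum_congr rfl fun i _ => by ring
    rw [h3]; ring

/-- The derivative in `t` of the orthogonality relation `lam α t (orthPoly α N t * f) = 0`. -/
theorem lam_orthDot {α t : ℝ} (ht : 0 < t) {N : ℕ} {f : ℝ[X]} (hf : f.degree < N) :
    lam α t (orthDot α N t * f) = lagW α t * (orthPoly α N t).eval t * f.eval t := by
  have h1 := hasDerivAt_lam_orthPoly_mul (α := α) ht N f
  have h2 : HasDerivAt (fun s => lam α s (orthPoly α N s * f)) 0 t := by
    refine (hasDerivAt_const t (0 : ℝ)).congr_of_eventuallyEq ?_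
    filter_upwards [Ioi_mem_nhds ht] with s hs
    exact orthPoly_orth hs hf
  linarith [h1.unique h2]

/-- The squared norm of the monic orthogonal polynomial of degree `N`. -/
noncomputable def orthNorm (α : ℝ) (N : ℕ) (t : ℝ) : ℝ :=
  lam α t (orthPoly α N t * orthPoly α N t)

theorem orthNorm_pos {α t : ℝ} (ht : 0 < t) (N : ℕ) : 0 < orthNorm α N t :=
  lam_sq_pos α ht (orthPoly_monic α N t).ne_zero

theorem orthPoly_coeff_formula {α t : ℝ} (ht : 0 < t) (N : ℕ) {f : ℝ[X]}
    (hf : f.degree < (N + 1 : ℕ)) :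
    lam α t (orthPoly α N t * f) = f.coeff N * orthNorm α N t :=
  orth_coeff (lamLin α ht) (orthPoly_monic α N t) (orthPoly_natDegree α N t)
    (fun _ h => orthPoly_orth ht h) hf

theorem hasDerivAt_orthNorm {α t : ℝ} (ht : 0 < t) (N : ℕ) :
    HasDerivAt (orthNorm α N) (-(lagW α t * (orthPoly α N t).eval t ^ 2)) t := by
  refine ((hasDerivAt_lam_orthPoly_mul (α := α) ht N (X ^ N)).congr_of_eventuallyEq
    ?_).congr_deriv ?_
  · filter_upwards [Ioi_mem_nhds ht] with s hs
    rw [orthPoly_coeff_formula hs N]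
    · simp
    · rw [degree_X_pow]; exact_mod_cast Nat.lt_succ_self N
  · -- `X ^ N = P - (P - X ^ N)`, where `P - X ^ N` and `Ṗ` have degree `< N`.
    have h1 : lam α t (orthDot α N t * orthPoly α N t) = 0 := by
      rw [mul_comm]; exact orthPoly_orth ht (degree_polySum_lt _)
    have h2 := lam_orthDot (α := α) ht (degree_polySum_lt (orthCoef α N t))
    have h3 : lam α t (orthDot α N t * orthPoly α N t) =
        lam α t (orthDot α N t * X ^ N) +
        lam α t (orthDot α N t * polySum (orthCoef α N t)) := by
      conv_lhs => rw [orthPoly, mul_add]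
      exact (lamLin α ht).map_add _ _
    have h4 : (orthPoly α N t).eval t = t ^ N + (polySum (orthCoef α N t)).eval t := by
      simp [orthPoly]
    simp only [eval_pow, eval_X]
    linear_combination h1 - h3 - h2 + lagW α t * (orthPoly α N t).eval t * h4

/-- The coefficient of `X ^ m` in the monic orthogonal polynomial of degree `m + 1`. -/
noncomputable def subCoef (α : ℝ) (m : ℕ) (t : ℝ) : ℝ := (orthPoly α (m + 1) t).coeff m

theorem subCoef_eq (α : ℝ) (m : ℕ) (t : ℝ) :
    subCoef α m t = orthCoef α (m + 1) t (Fin.last m) := by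
  have := coeff_polySum (orthCoef α (m + 1) t) (Fin.last m)
  rw [Fin.val_last] at this
  simp [subCoef, orthPoly, this, coeff_X_pow]

theorem hasDerivAt_subCoef {α t : ℝ} (ht : 0 < t) (m : ℕ) :
    HasDerivAt (subCoef α m)
      (lagW α t * (orthPoly α (m + 1) t).eval t * (orthPoly α m t).eval t / orthNorm α m t) t := by
  have h1 : subCoef α m = fun s => orthCoef α (m + 1) s (Fin.last m) :=
    funext fun s => subCoef_eq α m s
  rw [h1]
  refine (differentiableAt_orthCoef ht (Fin.last m)).hasDerivAt.congr_deriv ?_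
  rw [eq_div_iff (orthNorm_pos ht m).ne']
  have h2 := coeff_polySum (fun i => deriv (fun s => orthCoef α (m + 1) s i) t) (Fin.last m)
  rw [← h2, Fin.val_last]
  have hd : (orthPoly α m t).degree < (m + 1 : ℕ) := by
    rw [degree_eq_natDegree (orthPoly_monic α m t).ne_zero, orthPoly_natDegree]
    exact_mod_cast Nat.lt_succ_self m
  rw [← lam_orthDot ht hd, mul_comm (orthDot _ _ _), orthDot,
    orthPoly_coeff_formula ht m (degree_polySum_lt _)]

/-! ### The logarithmic derivative of the Hankel determinant -/

/-- The matrix on the left is `t` times the derivative of the moment matrix, so the left-hand side is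
`t` times the derivative of the Hankel determinant. -/
theorem trace_adj_moments {α t : ℝ} (ht : 0 < t) (m : ℕ) :
    ((momMat α (m + 1) t).adjugate * Matrix.of fun i j : Fin (m + 1) =>
      -(lagW α t * t ^ ((i : ℕ) + (j : ℕ) + 1))).trace =
    ((m + 1) * (m + 1 + α) + subCoef α m t) * (momMat α (m + 1) t).det := by
  set M := momMat α (m + 1) t with hM
  set N : Matrix (Fin (m + 1)) (Fin (m + 1)) ℝ := Matrix.diagonal fun i => ((i : ℕ) : ℝ) with hN
  -- The companion matrix of the orthogonal polynomial of degree `m + 1`.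
  set K : Matrix (Fin (m + 1)) (Fin (m + 1)) ℝ := Matrix.of fun i j =>
    if (j : ℕ) = m then -orthCoef α (m + 1) t i else if (i : ℕ) = j + 1 then 1 else 0 with hK
  have hMK : ∀ i j, (M * K) i j = lam α t (X ^ ((i : ℕ) + (j : ℕ) + 1)) := by
    intro i j
    rw [Matrix.mul_apply]
    by_cases hj : (j : ℕ) = m
    · have := orthCoef_spec (α := α) ht i
      simp only [hK, Matrix.of_apply, if_pos hj, mul_neg, Finset.sum_neg_distrib]
      rw [this, neg_neg, hj]
      congr 2; omega
    · simp only [hK, Matrix.of_apply, if_neg hj]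
      rw [Finset.sum_eq_single ⟨(j : ℕ) + 1, by omega⟩]
      · simp [hM, momMat, add_assoc]
      · intro k _ hk
        rw [if_neg (fun h => hk (Fin.ext h))]; ring
      · simp
  have hW : (Matrix.of fun i j : Fin (m + 1) => -(lagW α t * t ^ ((i : ℕ) + (j : ℕ) + 1))) =
      N * M + M * N + (1 + α) • M - M * K := by
    ext i j
    have h1 := lam_ibp α ht (X ^ ((i : ℕ) + (j : ℕ) + 1))
    have h2 : lam α t (derivative (X ^ ((i : ℕ) + (j : ℕ) + 1))) =
        ((i : ℕ) + (j : ℕ) + 1 : ℝ) * lam α t (X ^ ((i : ℕ) + (j : ℕ))) := by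
      have : derivative (X ^ ((i : ℕ) + (j : ℕ) + 1) : ℝ[X]) =
          ((i : ℕ) + (j : ℕ) + 1 : ℝ) • X ^ ((i : ℕ) + (j : ℕ)) := by
        rw [derivative_X_pow, smul_eq_C_mul]; simp
      rw [this]
      exact (lamLin α ht).map_smul _ _
    have h3 : lam (α - 1) t (X ^ ((i : ℕ) + (j : ℕ) + 1)) = lam α t (X ^ ((i : ℕ) + (j : ℕ))) := by
      rw [← lam_sub_one (α := α) ht, pow_succ']
    rw [h2, h3, eval_pow, eval_X] at h1
    rw [Matrix.of_apply, ← h1]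
    simp only [Matrix.sub_apply, Matrix.add_apply, hMK, hN, Matrix.diagonal_mul,
      Matrix.mul_diagonal, Matrix.smul_apply, smul_eq_mul]
    simp only [hM, momMat, Matrix.of_apply]
    ring
  have hadj : M.adjugate * M = M.det • 1 := Matrix.adjugate_mul M
  have t1 : (M.adjugate * (N * M)).trace = M.det * N.trace := by
    rw [← Matrix.mul_assoc, Matrix.trace_mul_comm, ← Matrix.mul_assoc, Matrix.mul_adjugate,
      Matrix.smul_mul, Matrix.one_mul, Matrix.trace_smul, smul_eq_mul]
  have t2 : ∀ A : Matrix (Fin (m + 1)) (Fin (m + 1)) ℝ,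
      (M.adjugate * (M * A)).trace = M.det * A.trace := by
    intro A
    rw [← Matrix.mul_assoc, hadj, Matrix.smul_mul, Matrix.one_mul, Matrix.trace_smul, smul_eq_mul]
  have t3 : (M.adjugate * ((1 + α) • M)).trace = (1 + α) * (m + 1) * M.det := by
    rw [Matrix.mul_smul, hadj, Matrix.trace_smul, Matrix.trace_smul, Matrix.trace_one]
    simp; ring
  have hNt : N.trace * 2 = m * (m + 1) := by
    rw [hN, Matrix.trace_diagonal, Fin.sum_univ_eq_sum_range (fun i => (i : ℝ))]
    have := Finset.sum_range_id_mul_two (m + 1)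
    have h := congrArg (Nat.cast : ℕ → ℝ) this
    push_cast at h
    simpa [mul_comm] using h
  have hKt : K.trace = -subCoef α m t := by
    rw [Matrix.trace, Fin.sum_univ_castSucc, Finset.sum_eq_zero, zero_add, subCoef_eq]
    · simp [hK]
    · intro i _
      have : (i : ℕ) ≠ m := by omega
      simp [hK, this]
  rw [hW, Matrix.mul_sub, Matrix.mul_add, Matrix.mul_add, Matrix.trace_sub, Matrix.trace_add,
    Matrix.trace_add, t1, t2, t2, t3, hKt]
  linear_combination M.det * hNt

theorem hasDerivAt_det_momMat {α t : ℝ} (ht : 0 < t) (m : ℕ) :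
    ∃ d, HasDerivAt (fun s => (momMat α (m + 1) s).det) d t ∧
      t * d = ((m + 1) * (m + 1 + α) + subCoef α m t) * (momMat α (m + 1) t).det := by
  refine ⟨_, hasDerivAt_det (M' := Matrix.of fun i j : Fin (m + 1) =>
    -((X ^ ((i : ℕ) + (j : ℕ)) : ℝ[X]).eval t * lagW α t))
    fun i j => hasDerivAt_lam α ht _, ?_⟩
  rw [← trace_adj_moments ht m, ← smul_eq_mul, ← Matrix.trace_smul, ← Matrix.mul_smul]
  congr 2
  ext i j
  simp [pow_succ]; ring

/-! ### The σ-form of Painlevé V -/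

theorem laguerre_sigma_PV (α : ℝ) (hα : -1 < α) (n : ℕ) (hn : 1 ≤ n) (H : ℝ → ℝ)
    (hH : ∀ t : ℝ, H t =
      t * deriv (fun s => Real.log (laguerreHankel n s α / laguerreHankel n 0 α)) t) :
    DifferentiableOn ℝ H (Set.Ioi 0) ∧ DifferentiableOn ℝ (deriv H) (Set.Ioi 0) ∧
    ∀ t : ℝ, 0 < t →
      (t * deriv (deriv H) t) ^ 2 =
        4 * (deriv H t) ^ 2 * (H t - (n : ℝ) * ((n : ℝ) + α) - t * deriv H t) +
        ((2 * (n : ℝ) + α - t) * deriv H t + H t) ^ 2 := by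
  -- If the normalising constant vanished, the junk value of division would make `H` zero.
  by_cases hD : laguerreHankel n 0 α = 0
  · have h0 : H = fun _ => 0 := by
      funext t
      simp [hH, hD]
    subst h0
    simp
  obtain ⟨m, rfl⟩ : ∃ m, n = m + 1 := ⟨n - 1, by omega⟩
  have hHp : ∀ t, 0 < t → H t = (m + 1) * (m + 1 + α) + subCoef α m t := by
    intro t ht
    obtain ⟨d, hd, hd'⟩ := hasDerivAt_det_momMat (α := α) ht m
    have hne := det_momMat_ne_zero (α := α) ht (m + 1)
    have h1 := (hd.div_const (laguerreHankel (m + 1) 0 α)).log (div_ne_zero hne hD)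
    have h2 : HasDerivAt (fun s => Real.log (laguerreHankel (m + 1) s α /
        laguerreHankel (m + 1) 0 α))
        (d / laguerreHankel (m + 1) 0 α /
          ((momMat α (m + 1) t).det / laguerreHankel (m + 1) 0 α)) t := by
      refine h1.congr_of_eventuallyEq ?_
      filter_upwards [Ioi_mem_nhds ht] with s hs
      rw [laguerreHankel_eq hs]
    rw [hH, h2.deriv, div_div_div_cancel_right₀ hD, ← mul_div_assoc, hd',
      mul_div_cancel_right₀ _ hne]
  set r : ℝ → ℝ := fun t =>
    lagW α t * (orthPoly α (m + 1) t).eval t * (orthPoly α m t).eval t / orthNorm α m t with hr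
  set β : ℝ → ℝ := fun t => orthNorm α (m + 1) t / orthNorm α m t with hβ
  have hH' : ∀ t, 0 < t → HasDerivAt H (r t) t := by
    intro t ht
    refine ((hasDerivAt_subCoef ht m).const_add (((m : ℝ) + 1) * (m + 1 + α))).congr_of_eventuallyEq ?_
    filter_upwards [Ioi_mem_nhds ht] with s hs
    exact hHp s hs
  have hlad := fun t (ht : 0 < t) => ladder (lamLin (α - 1) ht) (lamLin α ht)
    (fun f => (lam_sub_one ht f).symm) t (lagW α t) α (fun f => lam_ibp α ht f)
    (orthPoly_monic α (m + 1) t) (orthPoly_natDegree α (m + 1) t)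
    (orthPoly_monic α m t) (orthPoly_natDegree α m t)
    (fun f hf => orthPoly_orth ht hf) (fun f hf => orthPoly_orth ht hf)
  have hβr : ∀ t, 0 < t → β t + subCoef α m t = t * r t := by
    intro t ht
    have h1 := (hlad t ht).1
    have hg := (orthNorm_pos (α := α) ht m).ne'
    change orthNorm α (m + 1) t + subCoef α m t * orthNorm α m t = _ at h1
    simp only [hβ, hr]
    field_simp
    linear_combination h1
  have hβ' : ∀ t, 0 < t → HasDerivAt β
      ((-(lagW α t * (orthPoly α (m + 1) t).eval t ^ 2) * orthNorm α m t -
        orthNorm α (m + 1) t * -(lagW α t * (orthPoly α m t).eval t ^ 2)) /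
          orthNorm α m t ^ 2) t := fun t ht =>
    (hasDerivAt_orthNorm ht (m + 1)).div (hasDerivAt_orthNorm ht m) (orthNorm_pos ht m).ne'
  have hr' : ∀ t, 0 < t → HasDerivAt (deriv H) (deriv β t / t) t := by
    intro t ht
    have h1 := (((hβ' t ht).differentiableAt.hasDerivAt).add
      (hasDerivAt_subCoef (α := α) ht m)).div (hasDerivAt_id t) ht.ne'
    refine (h1.congr_of_eventuallyEq ?_).congr_deriv ?_
    · filter_upwards [Ioi_mem_nhds ht] with s hs
      rw [(hH' s hs).deriv]
      simp only [Pi.add_apply, Pi.div_apply, id]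
      rw [hβr s hs, mul_div_cancel_left₀ _ (ne_of_gt hs)]
    · have h2 := hβr t ht
      have h3 : lagW α t * (orthPoly α (m + 1) t).eval t * (orthPoly α m t).eval t /
        orthNorm α m t = r t := rfl
      rw [h3]
      simp only [Pi.add_apply, id]
      rw [h2]
      field_simp
      ring
  refine ⟨fun t ht => (hH' t ht).differentiableAt.differentiableWithinAt,
    fun t ht => (hr' t ht).differentiableAt.differentiableWithinAt, fun t ht => ?_⟩
  have h1 := hβr t ht
  have h2 := (hlad t ht).2
  have hg := (orthNorm_pos (α := α) ht m).ne'
  change (orthNorm α (m + 1) t - _) * (orthNorm α m t - _) =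
    (orthNorm α m t * _ + _) * (orthNorm α m t * _ + _) at h2
  rw [(hr' t ht).deriv, (hH' t ht).deriv, hHp t ht, mul_div_cancel₀ _ ht.ne', (hβ' t ht).deriv]
  rw [← eq_sub_iff_add_eq'] at h1
  rw [h1]
  -- `(β')² = (A - B)² = (A + B)² - 4 A B` with `A B = β r²`.
  have hAB : lagW α t * (orthPoly α (m + 1) t).eval t ^ 2 / orthNorm α m t +
      orthNorm α (m + 1) t * (lagW α t * (orthPoly α m t).eval t ^ 2) / orthNorm α m t ^ 2 =
      β t - (m + 1) * (m + 1 + α) - (2 * (m + 1) + α) * r t := by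
    simp only [hβ, hr]
    field_simp
    linear_combination -h2
  have hβ2 : (-(lagW α t * (orthPoly α (m + 1) t).eval t ^ 2) * orthNorm α m t -
        orthNorm α (m + 1) t * -(lagW α t * (orthPoly α m t).eval t ^ 2)) /
          orthNorm α m t ^ 2 =
      orthNorm α (m + 1) t * (lagW α t * (orthPoly α m t).eval t ^ 2) / orthNorm α m t ^ 2 -
      lagW α t * (orthPoly α (m + 1) t).eval t ^ 2 / orthNorm α m t := by
    field_simp
    ring
  have hprod : lagW α t * (orthPoly α (m + 1) t).eval t ^ 2 / orthNorm α m t *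
      (orthNorm α (m + 1) t * (lagW α t * (orthPoly α m t).eval t ^ 2) / orthNorm α m t ^ 2) =
      β t * r t ^ 2 := by
    simp only [hβ, hr]
    field_simp
  rw [hβ2]
  generalize lagW α t * (orthPoly α (m + 1) t).eval t ^ 2 / orthNorm α m t = A at *
  generalize orthNorm α (m + 1) t * (lagW α t * (orthPoly α m t).eval t ^ 2) /
    orthNorm α m t ^ 2 = B at *
  generalize r t = r at *
  generalize β t = b at *
  push_cast
  linear_combination (A + B + (b - (m + 1) * (m + 1 + α) - (2 * (m + 1) + α) * r)) * hAB -
    4 * hprod
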